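/- For f continuous on [0,1], (Iᵅ f)(x) → f(x) for each x ∈ (0,1] as α → 0⁺ (pointwise convergence of the Riemann–Liouville fractional integral to the identity). -/

import Mathlib

open MeasureTheory Set Filter

/-- Riemann–Liouville fractional integral of order `α` with base point `0`
    (with the convention `I⁰ = Id`). -/
noncomputable def RL (α : ℝ) (f : ℝ → ℝ) (x : ℝ) : ℝ :=
  if α = 0 then f x else (Real.Gamma α)⁻¹ * ∫ t in (0:ℝ)..x, (x - t) ^ (α - 1) * f t

lemma rl_bound (g : ℝ → ℝ) (x : ℝ) (hx : 0 < x) (hg : ContinuousOn g (Icc 0 x))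
    (ε K : ℝ) (hb : ∀ s ∈ Icc 0 x, |g s - g 0| ≤ ε + K * s) (α : ℝ) (hα : 0 < α) :
    |(Real.Gamma α)⁻¹ * (∫ s in (0:ℝ)..x, s ^ (α - 1) * g s) - g 0 * (x ^ α / Real.Gamma (α + 1))|
      ≤ ε * (x ^ α / Real.Gamma (α + 1)) +
        K * (α * x ^ (α + 1) / ((α + 1) * Real.Gamma (α + 1))) := by
  have hΓ : 0 < Real.Gamma α := Real.Gamma_pos_of_pos hα
  have h1 : IntervalIntegrable (fun s : ℝ => s ^ (α - 1)) volume 0 x :=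
    intervalIntegral.intervalIntegrable_rpow' (by linarith)
  have h2 : IntervalIntegrable (fun s : ℝ => s ^ α) volume 0 x :=
    intervalIntegral.intervalIntegrable_rpow' (by linarith)
  have i1 : ∫ s in (0:ℝ)..x, s ^ (α - 1) = x ^ α / α := by
    rw [integral_rpow (Or.inl (by linarith))]
    simp [Real.zero_rpow hα.ne']
  have i2 : ∫ s in (0:ℝ)..x, s ^ α = x ^ (α + 1) / (α + 1) := by
    rw [integral_rpow (Or.inl (by linarith))]
    simp [Real.zero_rpow (by linarith : α + 1 ≠ 0)]
  have h3 : IntervalIntegrable (fun s : ℝ => s ^ (α - 1) * g s) volume 0 x :=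
    h1.mul_continuousOn (by rwa [uIcc_of_le hx.le])
  have e : (Real.Gamma α)⁻¹ * (∫ s in (0:ℝ)..x, s ^ (α - 1) * g s)
      - g 0 * (x ^ α / Real.Gamma (α + 1))
      = (Real.Gamma α)⁻¹ * ∫ s in (0:ℝ)..x, (s ^ (α - 1) * g s - s ^ (α - 1) * g 0) := by
    rw [intervalIntegral.integral_sub h3 (h1.mul_const _), intervalIntegral.integral_mul_const, i1,
      Real.Gamma_add_one hα.ne']
    field_simp
  have key : |∫ s in (0:ℝ)..x, (s ^ (α - 1) * g s - s ^ (α - 1) * g 0)|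
      ≤ ∫ s in (0:ℝ)..x, (ε * s ^ (α - 1) + K * s ^ α) := by
    rw [← Real.norm_eq_abs]
    refine intervalIntegral.norm_integral_le_of_norm_le hx.le (ae_of_all _ fun s hs => ?_)
      ((h1.const_mul ε).add (h2.const_mul K))
    have hp : 0 ≤ s ^ (α - 1) := Real.rpow_nonneg hs.1.le _
    have hs' : s ^ α = s ^ (α - 1) * s := by
      rw [← Real.rpow_add_one hs.1.ne']; simp
    rw [← mul_sub, norm_mul, Real.norm_of_nonneg hp, Real.norm_eq_abs, hs']
    have := mul_le_mul_of_nonneg_left (hb s ⟨hs.1.le, hs.2⟩) hp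
    linarith
  rw [intervalIntegral.integral_add (h1.const_mul ε) (h2.const_mul K),
    intervalIntegral.integral_const_mul, intervalIntegral.integral_const_mul, i1, i2] at key
  rw [e, abs_mul, abs_of_pos (inv_pos.2 hΓ)]
  refine (mul_le_mul_of_nonneg_left key (inv_pos.2 hΓ).le).trans (le_of_eq ?_)
  rw [Real.Gamma_add_one hα.ne']
  field_simp

lemma rl_modulus (g : ℝ → ℝ) (x : ℝ) (hx : 0 < x) (hg : ContinuousOn g (Icc 0 x))
    (ε : ℝ) (hε : 0 < ε) : ∃ K : ℝ, ∀ s ∈ Icc 0 x, |g s - g 0| ≤ ε + K * s := by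
  obtain ⟨M, hM⟩ := isCompact_Icc.exists_bound_of_continuousOn hg
  have h0 : (0:ℝ) ∈ Icc 0 x := ⟨le_rfl, hx.le⟩
  have hM0 : 0 ≤ M := (norm_nonneg _).trans (hM 0 h0)
  obtain ⟨δ, hδ, h⟩ := Metric.continuousOn_iff.1 hg 0 h0 ε hε
  refine ⟨2 * M / δ, fun s hs => ?_⟩
  rcases lt_or_ge s δ with hlt | hge
  · have := h s hs (by rw [Real.dist_eq, sub_zero, abs_of_nonneg hs.1]; exact hlt)
    rw [Real.dist_eq] at this
    have h4 : 0 ≤ 2 * M / δ * s := mul_nonneg (by positivity) hs.1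
    linarith
  · have h5 : |g s - g 0| ≤ |g s| + |g 0| := abs_sub _ _
    have h6 := hM s hs
    have h7 := hM 0 h0
    rw [Real.norm_eq_abs] at h6 h7
    have h8 : 2 * M / δ * δ ≤ 2 * M / δ * s := mul_le_mul_of_nonneg_left hge (by positivity)
    rw [div_mul_cancel₀ _ hδ.ne'] at h8
    linarith

/-- For continuous `f` on `[0,1]`, `(Iᵅ f)(x) → f(x)` for each `x ∈ (0,1]` as `α → 0⁺`. -/
theorem rl_tendsto_zero_pointwise (f : ℝ → ℝ) (hf : ContinuousOn f (Icc (0:ℝ) 1)) :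
    ∀ x ∈ Ioc (0:ℝ) 1,
      Tendsto (fun α : ℝ => RL α f x) (nhdsWithin 0 (Ioi (0:ℝ))) (nhds (f x)) := by
  intro x hx
  have hx0 : 0 < x := hx.1
  have hg : ContinuousOn (fun s => f (x - s)) (Icc 0 x) := by
    refine hf.comp (by fun_prop) fun s hs => ⟨?_, ?_⟩
    · linarith [hs.2]
    · linarith [hs.1, hx.2]
  have hRL : ∀ α : ℝ, 0 < α → RL α f x =
      (Real.Gamma α)⁻¹ * ∫ s in (0:ℝ)..x, s ^ (α - 1) * f (x - s) := by
    intro α hα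
    have := intervalIntegral.integral_comp_sub_left (a := 0) (b := x)
      (fun s : ℝ => s ^ (α - 1) * f (x - s)) x
    simp only [sub_sub_cancel, sub_self, sub_zero] at this
    rw [RL, if_neg hα.ne', this]
  have cΓ : ContinuousAt (fun α : ℝ => Real.Gamma (α + 1)) 0 := by
    have h : ContinuousAt Real.Gamma ((0:ℝ) + 1) := by
      refine (Real.differentiableAt_Gamma fun m => ?_).continuousAt
      have : (0:ℝ) ≤ m := m.cast_nonneg
      intro hh
      linarith
    exact ContinuousAt.comp (f := fun α : ℝ => α + 1) h (by fun_prop)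
  have hc : Tendsto (fun α : ℝ => x ^ α / Real.Gamma (α + 1)) (nhdsWithin 0 (Ioi (0:ℝ)))
      (nhds 1) := by
    have h : ContinuousAt (fun α : ℝ => x ^ α / Real.Gamma (α + 1)) 0 :=
      (Real.continuousAt_const_rpow hx0.ne').div cΓ (by simp)
    have h' := h.tendsto
    simp only [Real.rpow_zero, zero_add, Real.Gamma_one, div_one] at h'
    exact h'.mono_left nhdsWithin_le_nhds
  have hd : Tendsto (fun α : ℝ => α * x ^ (α + 1) / ((α + 1) * Real.Gamma (α + 1)))
      (nhdsWithin 0 (Ioi (0:ℝ))) (nhds 0) := by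
    have hp : ContinuousAt (fun α : ℝ => x ^ (α + 1)) 0 :=
      ContinuousAt.comp (f := fun α : ℝ => α + 1) (Real.continuousAt_const_rpow hx0.ne')
        (by fun_prop)
    have hl : ContinuousAt (fun α : ℝ => α + 1) 0 := by fun_prop
    have h : ContinuousAt (fun α : ℝ => α * x ^ (α + 1) / ((α + 1) * Real.Gamma (α + 1))) 0 :=
      (continuousAt_id.mul hp).div (hl.mul cΓ) (by simp)
    have h' := h.tendsto
    simp only [zero_mul, zero_div] at h'
    exact h'.mono_left nhdsWithin_le_nhds
  have hdiff : Tendsto (fun α : ℝ => RL α f x - f x * (x ^ α / Real.Gamma (α + 1)))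
      (nhdsWithin 0 (Ioi (0:ℝ))) (nhds 0) := by
    rw [Metric.tendsto_nhds]
    intro ε hε
    obtain ⟨K, hK⟩ := rl_modulus _ x hx0 hg (ε / 2) (by linarith)
    have hlim := (hc.const_mul (ε / 2)).add (hd.const_mul K)
    have hev := hlim.eventually (gt_mem_nhds (show ε / 2 * 1 + K * 0 < ε by linarith))
    filter_upwards [hev, self_mem_nhdsWithin] with α h1 h2
    have hb := rl_bound _ x hx0 hg (ε / 2) K hK α h2
    simp only [sub_zero] at hb
    rw [Real.dist_eq, sub_zero, hRL α h2]
    exact hb.trans_lt h1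
  have := hdiff.add (hc.const_mul (f x))
  simpa using this
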